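/- Let S be a bounded linear operator on H admitting an A-adjoint. Then ω_A(S)^4 ≤ (1/4) · ‖ (S^{♯_A} S)² + (S S^{♯_A})² ‖_A + (1/2) · ω_A( S^{♯_A} S² S^{♯_A} ). -/

import Mathlib

noncomputable section

open ContinuousLinearMap

variable {H : Type*} [NormedAddCommGroup H] [InnerProductSpace ℂ H] [CompleteSpace H]

/-- The semi-inner product induced by the positive operator `A`: `⟨x, y⟩_A := ⟨A x, y⟩`. -/
def innA (A : H →L[ℂ] H) (x y : H) : ℂ := inner ℂ (A x) y

/-- The seminorm induced by `A`: `‖x‖_A := ⟨x, x⟩_A ^ (1/2)`. -/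
def vnormA (A : H →L[ℂ] H) (x : H) : ℝ := Real.sqrt (innA A x x).re

/-- The `A`-operator seminorm: `‖T‖_A := sup {‖T x‖_A : ‖x‖_A = 1}`. -/
def opNormA (A T : H →L[ℂ] H) : ℝ :=
  sSup {c : ℝ | ∃ x : H, vnormA A x = 1 ∧ c = vnormA A (T x)}

/-- The `A`-numerical radius: `ω_A(T) := sup {|⟨T x, x⟩_A| : ‖x‖_A = 1}`. -/
def wA (A T : H →L[ℂ] H) : ℝ :=
  sSup {c : ℝ | ∃ x : H, vnormA A x = 1 ∧ c = ‖innA A (T x) x‖}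

/-- `T` admits an `A`-adjoint: there is a bounded operator `X` with `A X = T* A`. -/
def HasAAdjoint (A T : H →L[ℂ] H) : Prop :=
  ∃ X : H →L[ℂ] H, A ∘L X = adjoint T ∘L A

/-- `X` is the reduced `A`-adjoint `T^{♯_A}` of `T`: it solves `A X = T* A` and its range
is contained in the closure of the range of `A`. -/
def IsReducedAAdjoint (A T X : H →L[ℂ] H) : Prop :=
  (A ∘L X = adjoint T ∘L A) ∧ ∀ y : H, X y ∈ closure (Set.range A)

set_option linter.unusedSectionVars false

/-- A positive operator factors its semi-inner product through a bounded operator. -/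
theorem exists_innA_eq_inner {A : H →L[ℂ] H} (hA : A.IsPositive) :
    ∃ B : H →L[ℂ] H, ∀ x y, innA A x y = inner ℂ (B x) (B y) := by
  have hA' : 0 ≤ A := (nonneg_iff_isPositive A).2 hA
  have hB : IsSelfAdjoint (CFC.sqrt A) := IsSelfAdjoint.of_nonneg (CFC.sqrt_nonneg A)
  refine ⟨CFC.sqrt A, fun x y => ?_⟩
  rw [innA, ← adjoint_inner_left, ← star_eq_adjoint, hB.star_eq, ← mul_apply_eq_comp,
    CFC.sqrt_mul_sqrt_self A hA']

theorem vnormA_eq_norm {A B : H →L[ℂ] H} (hB : ∀ x y, innA A x y = inner ℂ (B x) (B y)) (x : H) :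
    vnormA A x = ‖B x‖ := by
  rw [vnormA, hB, inner_self_eq_norm_sq_to_K]
  norm_cast
  exact Real.sqrt_sq (norm_nonneg _)

theorem norm_innA_le {A : H →L[ℂ] H} (hA : A.IsPositive) (x y : H) :
    ‖innA A x y‖ ≤ vnormA A x * vnormA A y := by
  obtain ⟨B, hB⟩ := exists_innA_eq_inner hA
  rw [vnormA_eq_norm hB, vnormA_eq_norm hB, hB]
  exact norm_inner_le_norm _ _

theorem re_innA_self {A : H →L[ℂ] H} (hA : A.IsPositive) (x : H) :
    (innA A x x).re = vnormA A x ^ 2 := by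
  obtain ⟨B, hB⟩ := exists_innA_eq_inner hA
  rw [vnormA_eq_norm hB, hB, inner_self_eq_norm_sq_to_K]
  norm_cast

theorem vnormA_nonneg (A : H →L[ℂ] H) (x : H) : 0 ≤ vnormA A x := Real.sqrt_nonneg _

theorem innA_add_left (A : H →L[ℂ] H) (x y z : H) :
    innA A (x + y) z = innA A x z + innA A y z := by
  simp [innA]

theorem innA_add_right (A : H →L[ℂ] H) (x y z : H) :
    innA A x (y + z) = innA A x y + innA A x z := by
  simp [innA]

theorem innA_conj_symm {A : H →L[ℂ] H} (hA : A.IsPositive) (x y : H) :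
    (starRingEnd ℂ) (innA A y x) = innA A x y := by
  obtain ⟨B, hB⟩ := exists_innA_eq_inner hA
  rw [hB, hB, inner_conj_symm]

/-- Symmetry with respect to the semi-inner product induced by `A`. -/
def IsASymmetric (A R : H →L[ℂ] H) : Prop :=
  ∀ x y, innA A (R x) y = innA A x (R y)

theorem IsASymmetric.add {A R T : H →L[ℂ] H} (hR : IsASymmetric A R) (hT : IsASymmetric A T) :
    IsASymmetric A (R + T) := fun x y => by
  simp only [add_apply, innA_add_left, innA_add_right, hR x y, hT x y]

theorem IsASymmetric.pow {A R : H →L[ℂ] H} (hR : IsASymmetric A R) (n : ℕ) :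
    IsASymmetric A (R ^ n) := by
  induction n with
  | zero => exact fun x y => rfl
  | succ n ih =>
    intro x y
    rw [pow_succ, mul_apply_eq_comp, ih, hR, ← mul_apply_eq_comp, ← pow_succ', pow_succ]

theorem IsASymmetric.vnormA_sq_le {A R : H →L[ℂ] H} (hA : A.IsPositive) (hR : IsASymmetric A R)
    {x : H} (hx : vnormA A x = 1) : vnormA A (R x) ^ 2 ≤ vnormA A ((R ^ 2) x) := by
  rw [← re_innA_self hA, hR, pow_two, mul_apply_eq_comp]
  calc _ ≤ ‖innA A x (R (R x))‖ := Complex.re_le_norm _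
    _ ≤ _ := norm_innA_le hA _ _
    _ = _ := by rw [hx, one_mul]

theorem IsASymmetric.vnormA_pow_le {A R : H →L[ℂ] H} (hA : A.IsPositive) (hR : IsASymmetric A R)
    {x : H} (hx : vnormA A x = 1) (n : ℕ) :
    vnormA A (R x) ^ 2 ^ n ≤ vnormA A ((R ^ 2 ^ n) x) := by
  induction n with
  | zero => simp
  | succ n ih =>
    rw [pow_succ 2 n, pow_mul, pow_mul]
    exact (pow_le_pow_left₀ (pow_nonneg (vnormA_nonneg _ _) _) ih 2).trans
      ((hR.pow (2 ^ n)).vnormA_sq_le hA hx)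

/-- An `A`-symmetric bounded operator is bounded for the seminorm induced by `A`. -/
theorem IsASymmetric.vnormA_le {A R : H →L[ℂ] H} (hA : A.IsPositive) (hR : IsASymmetric A R)
    {x : H} (hx : vnormA A x = 1) : vnormA A (R x) ≤ ‖R‖ + 1 := by
  obtain ⟨B, hB⟩ := exists_innA_eq_inner hA
  have hM : 0 < ‖R‖ + 1 := by positivity
  by_contra! hlt
  have ht : 1 < vnormA A (R x) / (‖R‖ + 1) := (one_lt_div hM).2 hlt
  obtain ⟨n, hn⟩ := pow_unbounded_of_one_lt (‖B‖ * ‖x‖) ht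
  have hn' : ‖B‖ * ‖x‖ < (vnormA A (R x) / (‖R‖ + 1)) ^ 2 ^ n :=
    hn.trans_le (pow_le_pow_right₀ ht.le Nat.lt_two_pow_self.le)
  rw [div_pow, lt_div_iff₀ (by positivity)] at hn'
  refine hn'.not_ge ((hR.vnormA_pow_le hA hx n).trans ?_)
  rw [vnormA_eq_norm hB]
  calc ‖B ((R ^ 2 ^ n) x)‖ ≤ ‖B‖ * (‖R ^ 2 ^ n‖ * ‖x‖) :=
        (B.le_opNorm _).trans (by gcongr; exact le_opNorm _ _)
    _ ≤ ‖B‖ * ((‖R‖ + 1) ^ 2 ^ n * ‖x‖) := by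
        gcongr
        exact (norm_pow_le' R (by positivity)).trans (by gcongr; linarith)
    _ = _ := by ring

theorem IsASymmetric.vnormA_le_opNormA {A R : H →L[ℂ] H} (hA : A.IsPositive)
    (hR : IsASymmetric A R) {x : H} (hx : vnormA A x = 1) : vnormA A (R x) ≤ opNormA A R := by
  refine le_csSup ⟨‖R‖ + 1, ?_⟩ ⟨x, hx, rfl⟩
  rintro c ⟨y, hy, rfl⟩
  exact hR.vnormA_le hA hy

theorem IsASymmetric.norm_innA_mul_le_wA {A P Q : H →L[ℂ] H} (hA : A.IsPositive)
    (hP : IsASymmetric A P) (hQ : IsASymmetric A Q) {x : H} (hx : vnormA A x = 1) :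
    ‖innA A ((P * Q) x) x‖ ≤ wA A (P * Q) := by
  refine le_csSup ⟨(‖Q‖ + 1) * (‖P‖ + 1), ?_⟩ ⟨x, hx, rfl⟩
  rintro c ⟨y, hy, rfl⟩
  rw [mul_apply_eq_comp, hP]
  exact (norm_innA_le hA _ _).trans (mul_le_mul (hQ.vnormA_le hA hy) (hP.vnormA_le hA hy)
    (vnormA_nonneg _ _) (by positivity))

/-- The square of the expectation of `P + Q` at a unit vector, for `A`-symmetric `P` and `Q`. -/
theorem IsASymmetric.re_innA_add_sq_le {A P Q : H →L[ℂ] H} (hA : A.IsPositive)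
    (hP : IsASymmetric A P) (hQ : IsASymmetric A Q) {x : H} (hx : vnormA A x = 1) :
    (innA A ((P + Q) x) x).re ^ 2 ≤ opNormA A (P ^ 2 + Q ^ 2) + 2 * wA A (P * Q) := by
  have hle : |(innA A ((P + Q) x) x).re| ≤ vnormA A ((P + Q) x) :=
    (Complex.abs_re_le_norm _).trans ((norm_innA_le hA _ _).trans_eq (by rw [hx, mul_one]))
  have hexp : vnormA A ((P + Q) x) ^ 2 =
      (innA A ((P ^ 2 + Q ^ 2) x) x).re + 2 * (innA A ((P * Q) x) x).re := by
    have hcross : (innA A (P x) (Q x)).re = (innA A (Q x) (P x)).re := by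
      rw [← innA_conj_symm hA, Complex.conj_re]
    rw [← re_innA_self hA]
    simp only [add_apply, pow_two, mul_apply_eq_comp, innA_add_left, innA_add_right, Complex.add_re,
      hP (P x) x, hQ (Q x) x, hP (Q x) x, hcross]
    ring
  have hsum : (innA A ((P ^ 2 + Q ^ 2) x) x).re ≤ opNormA A (P ^ 2 + Q ^ 2) :=
    (Complex.re_le_norm _).trans <| (norm_innA_le hA _ _).trans <| by
      rw [hx, mul_one]
      exact ((hP.pow 2).add (hQ.pow 2)).vnormA_le_opNormA hA hx
  have hprod : (innA A ((P * Q) x) x).re ≤ wA A (P * Q) :=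
    (Complex.re_le_norm _).trans (hP.norm_innA_mul_le_wA hA hQ hx)
  calc _ = |(innA A ((P + Q) x) x).re| ^ 2 := (sq_abs _).symm
    _ ≤ vnormA A ((P + Q) x) ^ 2 := pow_le_pow_left₀ (abs_nonneg _) hle 2
    _ ≤ _ := by linarith

theorem innA_adjoint_left {A S X : H →L[ℂ] H} (h : A ∘L X = adjoint S ∘L A) (x y : H) :
    innA A (X x) y = innA A x (S y) := by
  rw [innA, ← comp_apply, h, comp_apply, adjoint_inner_left, innA]

theorem innA_adjoint_right {A S X : H →L[ℂ] H} (hA : A.IsPositive)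
    (h : A ∘L X = adjoint S ∘L A) (x y : H) : innA A (S x) y = innA A x (X y) := by
  rw [← innA_conj_symm hA, ← innA_adjoint_left h, innA_conj_symm hA]

/-- The mixed Schwarz bound `2 |⟨S x, x⟩_A|² ≤ ⟨(S♯ S + S S♯) x, x⟩_A` at unit vectors. -/
theorem two_mul_norm_innA_sq_le {A S X : H →L[ℂ] H} (hA : A.IsPositive)
    (h : A ∘L X = adjoint S ∘L A) {x : H} (hx : vnormA A x = 1) :
    2 * ‖innA A (S x) x‖ ^ 2 ≤ (innA A ((X * S + S * X) x) x).re := by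
  have hS : ‖innA A (S x) x‖ ≤ vnormA A (S x) :=
    (norm_innA_le hA _ _).trans_eq (by rw [hx, mul_one])
  have hX : ‖innA A (S x) x‖ ≤ vnormA A (X x) := by
    rw [innA_adjoint_right hA h]
    exact (norm_innA_le hA _ _).trans_eq (by rw [hx, one_mul])
  have hsum : (innA A ((X * S + S * X) x) x).re = vnormA A (S x) ^ 2 + vnormA A (X x) ^ 2 := by
    rw [← re_innA_self hA, ← re_innA_self hA, add_apply, mul_apply_eq_comp, mul_apply_eq_comp,
      innA_add_left, innA_adjoint_left h, innA_adjoint_right hA h (X x), Complex.add_re]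
  have hS2 := pow_le_pow_left₀ (norm_nonneg _) hS 2
  have hX2 := pow_le_pow_left₀ (norm_nonneg _) hX 2
  linarith

theorem opNormA_nonneg (A T : H →L[ℂ] H) : 0 ≤ opNormA A T :=
  Real.sSup_nonneg (by rintro c ⟨x, -, rfl⟩; exact vnormA_nonneg _ _)

theorem wA_nonneg (A T : H →L[ℂ] H) : 0 ≤ wA A T :=
  Real.sSup_nonneg (by rintro c ⟨x, -, rfl⟩; exact norm_nonneg _)

theorem wA_pow_le {A T : H →L[ℂ] H} {n : ℕ} (hn : n ≠ 0) {b : ℝ} (hb : 0 ≤ b)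
    (h : ∀ x, vnormA A x = 1 → ‖innA A (T x) x‖ ^ n ≤ b) : wA A T ^ n ≤ b := by
  have hle : wA A T ≤ b ^ (n⁻¹ : ℝ) := by
    refine Real.sSup_le ?_ (by positivity)
    rintro c ⟨x, hx, rfl⟩
    exact le_of_pow_le_pow_left₀ hn (by positivity)
      ((h x hx).trans_eq (Real.rpow_inv_natCast_pow hb hn).symm)
  exact (pow_le_pow_left₀ (wA_nonneg A T) hle n).trans_eq (Real.rpow_inv_natCast_pow hb hn)

theorem stmt13 (A : H →L[ℂ] H) (hA : A.IsPositive) (hA0 : A ≠ 0)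
    (S Ssharp : H →L[ℂ] H) (hS : IsReducedAAdjoint A S Ssharp) :
    wA A S ^ 4 ≤
      (1 / 4) * opNormA A ((Ssharp * S) ^ 2 + (S * Ssharp) ^ 2) +
        (1 / 2) * wA A (Ssharp * S ^ 2 * Ssharp) := by
  have hP : IsASymmetric A (Ssharp * S) := fun x y => by
    rw [mul_apply_eq_comp, mul_apply_eq_comp, innA_adjoint_left hS.1, innA_adjoint_right hA hS.1]
  have hQ : IsASymmetric A (S * Ssharp) := fun x y => by
    rw [mul_apply_eq_comp, mul_apply_eq_comp, innA_adjoint_right hA hS.1, innA_adjoint_left hS.1]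
  have hnonneg := opNormA_nonneg A ((Ssharp * S) ^ 2 + (S * Ssharp) ^ 2)
  have hnonneg' := wA_nonneg A (Ssharp * S ^ 2 * Ssharp)
  refine wA_pow_le four_ne_zero (by positivity) fun x hx => ?_
  have hmul : Ssharp * S ^ 2 * Ssharp = (Ssharp * S) * (S * Ssharp) := by
    simp only [pow_two, mul_assoc]
  have hsq := pow_le_pow_left₀ (by positivity) (two_mul_norm_innA_sq_le hA hS.1 hx) 2
  have hadd := hP.re_innA_add_sq_le hA hQ hx
  rw [hmul]
  linarith
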